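/- Let $R$ be a reduced root system in $\mathbb{R}^d$ with positive system $R_+$ and fundamental Weyl chamber $\mathbb{W}$. Then for every $x\in\mathbb{W}$ it holds that $\sum_{\alpha\in R_+}\frac{|\alpha|^2}{\langle\alpha,x\rangle^2}=\sum_{\alpha\in R_+}\sum_{\beta\in R_+}\frac{\langle\alpha,\beta\rangle}{\langle\alpha,x\rangle\,\langle\beta,x\rangle}$. -/

import Mathlib

open scoped RealInnerProductSpace

lemma sum_even_aux {E : Type*} [AddCommGroup E] [DecidableEq E] (R Rp : Finset E)
    (hsplit : ∀ α : E, α ∈ R ↔ (α ∈ Rp ∨ -α ∈ Rp)) (hdisj : ∀ α ∈ Rp, -α ∉ Rp)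
    (g : E → ℝ) (hg : ∀ α, g (-α) = g α) : ∑ α ∈ R, g α = 2 * ∑ α ∈ Rp, g α := by
  have h : R = Rp ∪ Rp.image (fun a => -a) := by
    ext α
    rw [hsplit, Finset.mem_union, Finset.mem_image]
    constructor
    · rintro (h | h)
      · exact Or.inl h
      · exact Or.inr ⟨-α, h, neg_neg α⟩
    · rintro (h | ⟨b, h, rfl⟩)
      · exact Or.inl h
      · right; simpa using h
  have hd : Disjoint Rp (Rp.image (fun a => -a)) := by
    rw [Finset.disjoint_left]
    intro a ha hb0
    obtain ⟨b, hb, rfl⟩ := Finset.mem_image.mp hb0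
    exact hdisj b hb ha
  rw [h, Finset.sum_union hd, Finset.sum_image (fun a _ b _ hab => neg_injective hab)]
  simp only [hg]
  ring

theorem stmt_9 {d : ℕ} (R Rp : Finset (EuclideanSpace ℝ (Fin d)))
    -- `R` is a reduced root system:
    (hR0 : ∀ α ∈ R, α ≠ 0)
    (hR1 : ∀ α ∈ R, ∀ c : ℝ, c • α ∈ R → c = 1 ∨ c = -1)
    (hR1' : ∀ α ∈ R, -α ∈ R)
    (hR2 : ∀ α ∈ R, ∀ y ∈ R, y - (2 * ⟪α, y⟫ / ‖α‖ ^ 2) • α ∈ R)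
    -- `Rp` is a positive system: `R = Rp ⊔ (-Rp)` separated by a hyperplane
    (hsplit : ∀ α : EuclideanSpace ℝ (Fin d), α ∈ R ↔ (α ∈ Rp ∨ -α ∈ Rp))
    (hdisj : ∀ α ∈ Rp, -α ∉ Rp)
    (hβ : ∃ β : EuclideanSpace ℝ (Fin d), β ∉ R ∧ ∀ α ∈ Rp, 0 < ⟪β, α⟫)
    -- `x` lies in the fundamental Weyl chamber
    (x : EuclideanSpace ℝ (Fin d)) (hx : ∀ α ∈ Rp, 0 < ⟪α, x⟫) :
    ∑ α ∈ Rp, ‖α‖ ^ 2 / ⟪α, x⟫ ^ 2 =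
      ∑ α ∈ Rp, ∑ β ∈ Rp, ⟪α, β⟫ / (⟪α, x⟫ * ⟪β, x⟫) := by
  classical
  set a : EuclideanSpace ℝ (Fin d) → ℝ := fun α => ⟪α, x⟫ with ha
  let σ : EuclideanSpace ℝ (Fin d) → EuclideanSpace ℝ (Fin d) → EuclideanSpace ℝ (Fin d) :=
    fun α y => y - (2 * ⟪α, y⟫ / ‖α‖ ^ 2) • α
  let Q : EuclideanSpace ℝ (Fin d) → EuclideanSpace ℝ (Fin d) → ℝ :=
    fun α β => a α ^ 2 * ‖β‖ ^ 2 + a β ^ 2 * ‖α‖ ^ 2 - 2 * a α * a β * ⟪α, β⟫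
  let h : EuclideanSpace ℝ (Fin d) → EuclideanSpace ℝ (Fin d) → ℝ :=
    fun α β => ⟪α, β⟫ * (a α * ‖β‖ ^ 2 / a β - ⟪α, β⟫) / Q α β
  let F : EuclideanSpace ℝ (Fin d) → EuclideanSpace ℝ (Fin d) → ℝ :=
    fun α β => if Q α β = 0 then 0 else ⟪α, β⟫ / (a α * a β)
  have hane : ∀ α ∈ R, a α ≠ 0 := by
    intro α hα
    rcases (hsplit α).1 hα with h1 | h1
    · exact (hx α h1).ne'
    · have := hx _ h1
      rw [inner_neg_left] at this
      simp only [ha]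
      linarith
  have hn : ∀ α ∈ R, ‖α‖ ≠ 0 := fun α hα => norm_ne_zero_iff.2 (hR0 α hα)
  have hinn : ∀ α ∈ R, ∀ β, ⟪σ α β, α⟫ = -⟪α, β⟫ := by
    intro α hα β
    have := hn α hα
    simp only [σ, inner_sub_left, inner_smul_left, real_inner_self_eq_norm_sq,
      real_inner_comm α β, conj_trivial]
    field_simp
    ring
  have hnorm : ∀ α ∈ R, ∀ β, ‖σ α β‖ ^ 2 = ‖β‖ ^ 2 := by
    intro α hα β
    have := hn α hα
    simp only [σ, norm_sub_sq_real, inner_smul_right, norm_smul, mul_pow, real_inner_comm α β,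
      Real.norm_eq_abs, sq_abs]
    field_simp
    ring
  have haσ : ∀ α β, a (σ α β) = a β - (2 * ⟪α, β⟫ / ‖α‖ ^ 2) * a α := by
    intro α β
    simp only [σ, ha, inner_sub_left, inner_smul_left, conj_trivial]
  have hinv : ∀ α ∈ R, ∀ β, σ α (σ α β) = β := by
    intro α hα β
    have h1 : ⟪α, σ α β⟫ = -⟪α, β⟫ := by rw [real_inner_comm]; exact hinn α hα β
    have : σ α (σ α β) = σ α β - (2 * ⟪α, σ α β⟫ / ‖α‖ ^ 2) • α := rfl
    rw [this, h1]
    simp only [σ, mul_neg, neg_div, neg_smul]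
    abel
  have hQT : ∀ α ∈ R, ∀ β, Q (σ α β) α = Q α β := by
    intro α hα β
    have := hn α hα
    simp only [Q, hinn α hα, hnorm α hα, haσ]
    field_simp
    ring
  have key : ∀ α ∈ R, ∀ β ∈ R, F α β = h α β - h (σ α β) α := by
    intro α hα β hβ
    have h1 := hn α hα
    have h2 := hane α hα
    have h3 := hane β hβ
    by_cases hq : Q α β = 0
    · simp only [F, h, hQT α hα, hq]
      simp
    · simp only [F, h, hQT α hα, hq, if_false, hinn α hα, haσ]
      have hq' := hq
      rw [← sub_div, eq_div_iff hq]
      simp only [Q]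
      field_simp
      ring
  have hsum0 : ∑ α ∈ R, ∑ β ∈ R, F α β = 0 := by
    have e1 : ∑ α ∈ R, ∑ β ∈ R, F α β
        = ∑ α ∈ R, ∑ β ∈ R, h α β - ∑ α ∈ R, ∑ β ∈ R, h (σ α β) α := by
      rw [← Finset.sum_sub_distrib]
      refine Finset.sum_congr rfl fun α hα => ?_
      rw [← Finset.sum_sub_distrib]
      exact Finset.sum_congr rfl fun β hβ => key α hα β hβ
    have e2 : ∑ α ∈ R, ∑ β ∈ R, h (σ α β) α = ∑ α ∈ R, ∑ β ∈ R, h β α := by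
      refine Finset.sum_congr rfl fun α hα => ?_
      exact Finset.sum_nbij' (σ α) (σ α) (fun β hβ => hR2 α hα β hβ)
        (fun β hβ => hR2 α hα β hβ) (fun β _ => hinv α hα β) (fun β _ => hinv α hα β)
        (fun β _ => rfl)
    rw [e1, e2, Finset.sum_comm, sub_self]
  have haneg : ∀ α, a (-α) = -a α := fun α => by simp only [ha, inner_neg_left]
  have hF1 : ∀ α β, F (-α) β = F α β := by
    intro α β
    simp only [F, Q, haneg, inner_neg_left, norm_neg, neg_mul, mul_neg, neg_neg, neg_sq, neg_div_neg_eq]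
  have hF2 : ∀ α β, F α (-β) = F α β := by
    intro α β
    simp only [F, Q, haneg, inner_neg_right, norm_neg, neg_mul, mul_neg, neg_neg, neg_sq, neg_div_neg_eq]
  have hsum1 : ∑ α ∈ Rp, ∑ β ∈ Rp, F α β = 0 := by
    rw [sum_even_aux R Rp hsplit hdisj (fun α => ∑ β ∈ R, F α β)
      (fun α => Finset.sum_congr rfl fun β _ => hF1 α β)] at hsum0
    simp only [fun α => sum_even_aux R Rp hsplit hdisj (F α) (hF2 α)] at hsum0
    rw [← Finset.mul_sum] at hsum0
    linarith
  have hmem : ∀ α ∈ Rp, α ∈ R := fun α hα => (hsplit α).2 (Or.inl hα)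
  have hQ0 : ∀ α ∈ Rp, ∀ β ∈ Rp, Q α β = 0 → α = β := by
    intro α hα β hβ hq
    have h2 := hane α (hmem α hα)
    have e : ‖a α • β - a β • α‖ ^ 2 = 0 := by
      rw [← hq, norm_sub_sq_real]
      simp only [Q, inner_smul_left, inner_smul_right, norm_smul, mul_pow, Real.norm_eq_abs, sq_abs,
        conj_trivial, real_inner_comm α β]
      ring
    have e2 : a α • β = a β • α := by
      rw [← sub_eq_zero, ← norm_eq_zero]
      exact pow_eq_zero_iff (two_ne_zero) |>.1 e
    have e3 : β = (a β / a α) • α := by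
      rw [div_eq_inv_mul, mul_smul, ← e2, smul_smul, inv_mul_cancel₀ h2, one_smul]
    rcases hR1 α (hmem α hα) _ (e3 ▸ hmem β hβ) with h4 | h4
    · rw [h4, one_smul] at e3
      exact e3.symm
    · rw [h4, neg_smul, one_smul] at e3
      exact absurd (e3 ▸ hβ) (hdisj α hα)
  have hpt : ∀ α ∈ Rp, ∀ β ∈ Rp, ⟪α, β⟫ / (a α * a β)
      = F α β + if α = β then ‖α‖ ^ 2 / a α ^ 2 else 0 := by
    intro α hα β hβ
    by_cases hab : α = β
    · subst hab
      have : Q α α = 0 := by simp only [Q, real_inner_self_eq_norm_sq]; ring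
      simp only [F, this, if_true, real_inner_self_eq_norm_sq, zero_add, sq]
    · have : Q α β ≠ 0 := fun hq => hab (hQ0 α hα β hβ hq)
      simp only [F, this, hab, if_false, add_zero]
  have hfin : ∑ α ∈ Rp, ∑ β ∈ Rp, ⟪α, β⟫ / (a α * a β)
      = ∑ α ∈ Rp, ∑ β ∈ Rp, F α β + ∑ α ∈ Rp, ‖α‖ ^ 2 / a α ^ 2 := by
    rw [← Finset.sum_add_distrib]
    refine Finset.sum_congr rfl fun α hα => ?_
    rw [Finset.sum_congr rfl (hpt α hα), Finset.sum_add_distrib, Finset.sum_ite_eq, if_pos hα]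
  rw [hsum1, zero_add] at hfin
  exact hfin.symm
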